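/- arXiv:math/0407262 — 2 statements merged into one kernel-verified Lean document; each statement's English description precedes it below -/
import Mathlib

section
/- Let x = (x₁, x̃) ∈ P_β' (i.e., x ∈ P_β with x₁ > 1 and |x̃| < x₁^β/2). Then the open Euclidean ball B(x, |x|^β/5) is contained in P_β. -/
open Metric

/-- The Euclidean norm of the "tail" `x̃ = (x₂, …, x_d)` of a point
`x = (x₁, x̃) ∈ ℝ^d` (here `d = n + 2 ≥ 2`). -/
noncomputable def tailNorm {n : ℕ} (x : EuclideanSpace ℝ (Fin (n + 2))) : ℝ :=
  Real.sqrt (∑ i ∈ Finset.univ.filter (fun i : Fin (n + 2) => i ≠ 0), x i ^ 2)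

/-- The parabola-shaped region `P_β = {x = (x₁, x̃) : x₁ > 0, |x̃| < x₁^β}` in `ℝ^d`,
`d = n + 2 ≥ 2`. -/
def Pbeta (n : ℕ) (β : ℝ) : Set (EuclideanSpace ℝ (Fin (n + 2))) :=
  {x | 0 < x 0 ∧ tailNorm x < x 0 ^ β}

/-!
For `0 ≤ β ≤ 1` the power `t ↦ t ^ β` drops by at most `s` when `t ≥ 1` is decreased by `s ≤ t`.
Moving a point by a distance less than `r` lowers `x₁` and raises `|x̃|` by less than `r` each, so
it stays in `P_β` as long as `|x̃| + 2r ≤ x₁^β`. On `P_β'` we have `|x̃| ≤ x₁ / 2`, and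
`√5 / 2 ≤ 5 / 4` gives `|x|^β ≤ (5 / 4) x₁^β`; then `r = |x|^β / 5` meets this condition, since
`1 / 2 + 2 / 5 * 5 / 4 = 1`.
-/

section Rpow

variable {β c s t : ℝ}

lemma mul_rpow_le_self_mul_rpow_of_one_le (hc : 1 ≤ c) (ht : 0 ≤ t) (hβ : β ≤ 1) :
    (c * t) ^ β ≤ c * t ^ β := by
  rw [Real.mul_rpow (by positivity) ht]
  gcongr
  exact Real.rpow_le_self_of_one_le hc hβ

lemma self_mul_rpow_le_mul_rpow_of_le_one (hc₀ : 0 ≤ c) (hc₁ : c ≤ 1) (ht : 0 ≤ t) (hβ : β ≤ 1) :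
    c * t ^ β ≤ (c * t) ^ β := by
  rw [Real.mul_rpow hc₀ ht]
  gcongr
  exact Real.self_le_rpow_of_le_one hc₀ hc₁ hβ

lemma rpow_sub_le_sub_rpow (ht : 1 ≤ t) (hs : 0 ≤ s) (hst : s ≤ t) (hβ : β ≤ 1) :
    t ^ β - s ≤ (t - s) ^ β := by
  have ht₀ : 0 < t := by positivity
  have hβt : t ^ β ≤ t := Real.rpow_le_self_of_one_le ht hβ
  calc t ^ β - s ≤ t ^ β - s * (t ^ β / t) := by
        gcongr
        exact mul_le_of_le_one_right hs ((div_le_one ht₀).2 hβt)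
    _ = (1 - s / t) * t ^ β := by ring
    _ ≤ ((1 - s / t) * t) ^ β :=
        self_mul_rpow_le_mul_rpow_of_le_one (sub_nonneg.2 ((div_le_one ht₀).2 hst))
          (sub_le_self 1 (by positivity)) ht₀.le hβ
    _ = (t - s) ^ β := by rw [sub_mul, one_mul, div_mul_cancel₀ s ht₀.ne']

end Rpow

section TailNorm

variable {n : ℕ}

lemma tailNorm_eq_norm_tail (x : EuclideanSpace ℝ (Fin (n + 2))) :
    tailNorm x = ‖WithLp.toLp 2 fun i : Fin (n + 1) ↦ x i.succ‖ := by
  simp [tailNorm, EuclideanSpace.norm_eq, Finset.sum_filter, Fin.sum_univ_succ]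

lemma tailNorm_nonneg (x : EuclideanSpace ℝ (Fin (n + 2))) : 0 ≤ tailNorm x :=
  Real.sqrt_nonneg _

lemma norm_sq_eq_sq_add_tailNorm_sq (x : EuclideanSpace ℝ (Fin (n + 2))) :
    ‖x‖ ^ 2 = x 0 ^ 2 + tailNorm x ^ 2 := by
  rw [tailNorm_eq_norm_tail, EuclideanSpace.real_norm_sq_eq, EuclideanSpace.real_norm_sq_eq,
    Fin.sum_univ_succ]

lemma tailNorm_le_norm (x : EuclideanSpace ℝ (Fin (n + 2))) : tailNorm x ≤ ‖x‖ := by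
  refine le_of_sq_le_sq ?_ (norm_nonneg x)
  rw [norm_sq_eq_sq_add_tailNorm_sq]
  exact le_add_of_nonneg_left (sq_nonneg (x 0))

lemma tailNorm_add_le (x y : EuclideanSpace ℝ (Fin (n + 2))) :
    tailNorm (x + y) ≤ tailNorm x + tailNorm y := by
  simp only [tailNorm_eq_norm_tail]
  exact norm_add_le (WithLp.toLp 2 fun i : Fin (n + 1) ↦ x i.succ)
    (WithLp.toLp 2 fun i : Fin (n + 1) ↦ y i.succ)

lemma tailNorm_le_tailNorm_add_dist (x y : EuclideanSpace ℝ (Fin (n + 2))) :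
    tailNorm y ≤ tailNorm x + dist y x := by
  calc tailNorm y = tailNorm (x + (y - x)) := by rw [add_sub_cancel]
    _ ≤ tailNorm x + tailNorm (y - x) := tailNorm_add_le x (y - x)
    _ ≤ tailNorm x + dist y x := by
        rw [dist_eq_norm]
        gcongr
        exact tailNorm_le_norm (y - x)

lemma norm_le_of_tailNorm_le_half {x : EuclideanSpace ℝ (Fin (n + 2))} (hx₀ : 0 ≤ x 0)
    (hx : tailNorm x ≤ x 0 / 2) : ‖x‖ ≤ 5 / 4 * x 0 := by
  refine le_of_sq_le_sq ?_ (by positivity)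
  calc ‖x‖ ^ 2 = x 0 ^ 2 + tailNorm x ^ 2 := norm_sq_eq_sq_add_tailNorm_sq x
    _ ≤ x 0 ^ 2 + (x 0 / 2) ^ 2 := by
        gcongr
        exact tailNorm_nonneg x
    _ ≤ (5 / 4 * x 0) ^ 2 := by linarith [sq_nonneg (x 0)]

end TailNorm

section Pbeta

variable {n : ℕ} {β r : ℝ} {x : EuclideanSpace ℝ (Fin (n + 2))}

lemma ball_subset_Pbeta (hβ₀ : 0 ≤ β) (hβ₁ : β ≤ 1) (hx : 1 ≤ x 0)
    (hr : tailNorm x + 2 * r ≤ x 0 ^ β) : ball x r ⊆ Pbeta n β := by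
  intro y hy
  have hyr : dist y x < r := hy
  have hβx : x 0 ^ β ≤ x 0 := Real.rpow_le_self_of_one_le hx hβ₁
  have hdist : dist y x < x 0 := by linarith [tailNorm_nonneg x, dist_nonneg (x := y) (y := x)]
  have hy₀ : x 0 - dist y x ≤ y 0 := by
    have h : |y 0 - x 0| ≤ dist y x := by
      simpa [dist_eq_norm] using PiLp.norm_apply_le (y - x) 0
    linarith [neg_le_of_abs_le h]
  refine ⟨by linarith, ?_⟩
  calc tailNorm y ≤ tailNorm x + dist y x := tailNorm_le_tailNorm_add_dist x y
    _ < x 0 ^ β - dist y x := by linarith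
    _ ≤ (x 0 - dist y x) ^ β := rpow_sub_le_sub_rpow hx dist_nonneg hdist.le hβ₁
    _ ≤ y 0 ^ β := Real.rpow_le_rpow (sub_nonneg.2 hdist.le) hy₀ hβ₀

lemma norm_rpow_le_of_tailNorm_le_half_rpow (hβ₀ : 0 ≤ β) (hβ₁ : β ≤ 1) (hx₁ : 1 ≤ x 0)
    (hx : tailNorm x ≤ x 0 ^ β / 2) : ‖x‖ ^ β ≤ 5 / 4 * x 0 ^ β := by
  have hx₀ : 0 ≤ x 0 := zero_le_one.trans hx₁
  have htail : tailNorm x ≤ x 0 / 2 := by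
    linarith [Real.rpow_le_self_of_one_le hx₁ hβ₁]
  calc ‖x‖ ^ β ≤ (5 / 4 * x 0) ^ β :=
        Real.rpow_le_rpow (norm_nonneg x) (norm_le_of_tailNorm_le_half hx₀ htail) hβ₀
    _ ≤ 5 / 4 * x 0 ^ β := mul_rpow_le_self_mul_rpow_of_one_le (by norm_num) hx₀ hβ₁

end Pbeta

/-- If `x ∈ P_β'`, i.e. `x ∈ P_β` with `x₁ > 1` and `|x̃| < x₁^β / 2`, then the open ball
`B(x, |x|^β / 5)` is contained in `P_β`. -/
theorem stmt0 (n : ℕ) (β : ℝ) (hβ0 : 0 < β) (hβ1 : β < 1)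
    (x : EuclideanSpace ℝ (Fin (n + 2))) (hx : x ∈ Pbeta n β)
    (hx1 : 1 < x 0) (hxt : tailNorm x < x 0 ^ β / 2) :
    ball x (‖x‖ ^ β / 5) ⊆ Pbeta n β := by
  have hnorm : ‖x‖ ^ β ≤ 5 / 4 * x 0 ^ β :=
    norm_rpow_le_of_tailNorm_le_half_rpow hβ0.le hβ1.le hx1.le hxt.le
  exact ball_subset_Pbeta hβ0.le hβ1.le hx1.le (by linarith)
end

section
/- There exists a constant c > 0, depending only on α, β and q, such that for every s ≥ 1, s^{αβ/2} · ∫_s^{s+s^β} t^{-q-1} (t-s)^{-α/2} dt ≤ c · ∫_s^{s+s^β} t^{-q-1} dt. -/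
open MeasureTheory

/-!
On `[s, s + h]` with `h = s ^ β ≤ s`, the weight `t ^ (-q - 1)` varies by at most a constant
factor, i.e. it satisfies a Harnack bound. For such a weight the average of a product with a
nonnegative function is at most that factor times the product of the averages, and the average of
`(t - s) ^ (-(α / 2))` is `h ^ (-(α / 2)) / (1 - α / 2)`.
-/

section Harnack

variable {w k : ℝ → ℝ} {a b s h r K : ℝ}

theorem sub_mul_integral_mul_le_of_harnack (hab : a ≤ b)
    (hw : IntervalIntegrable w volume a b) (hk : IntervalIntegrable k volume a b)
    (hwk : IntervalIntegrable (fun t => w t * k t) volume a b)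
    (hk0 : ∀ t ∈ Set.Icc a b, 0 ≤ k t)
    (hK : ∀ t ∈ Set.Icc a b, ∀ u ∈ Set.Icc a b, w t ≤ K * w u) :
    (b - a) * ∫ t in a..b, w t * k t ≤ K * (∫ t in a..b, w t) * ∫ t in a..b, k t := by
  have pointwise : ∀ u ∈ Set.Icc a b,
      ∫ t in a..b, w t * k t ≤ K * w u * ∫ t in a..b, k t := fun u hu => by
    rw [← intervalIntegral.integral_const_mul]
    exact intervalIntegral.integral_mono_on hab hwk (hk.const_mul _) fun t ht =>
      mul_le_mul_of_nonneg_right (hK t ht u hu) (hk0 t ht)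
  calc (b - a) * ∫ t in a..b, w t * k t
      = ∫ _u in a..b, ∫ t in a..b, w t * k t := by
        rw [intervalIntegral.integral_const, smul_eq_mul]
    _ ≤ ∫ u in a..b, K * w u * ∫ t in a..b, k t :=
        intervalIntegral.integral_mono_on hab intervalIntegrable_const
          ((hw.const_mul K).mul_const _) pointwise
    _ = K * (∫ t in a..b, w t) * ∫ t in a..b, k t := by
        rw [intervalIntegral.integral_mul_const, intervalIntegral.integral_const_mul]

theorem intervalIntegrable_sub_rpow (hr : -1 < r) :
    IntervalIntegrable (fun t : ℝ => (t - s) ^ r) volume a b := by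
  simpa only [sub_add_cancel] using
    (intervalIntegral.intervalIntegrable_rpow' (a := a - s) (b := b - s) hr).comp_sub_right s

theorem integral_sub_rpow (hr : -1 < r) :
    ∫ t in s..(s + h), (t - s) ^ r = h ^ (r + 1) / (r + 1) := by
  have hr1 : r + 1 ≠ 0 := by linarith
  rw [intervalIntegral.integral_comp_sub_right (fun x : ℝ => x ^ r) s, sub_self,
    add_sub_cancel_left, integral_rpow (Or.inl hr), Real.zero_rpow hr1, sub_zero]

theorem rpow_mul_integral_mul_sub_rpow_le_of_harnack (hr : r < 1) (hh : 0 < h)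
    (hw : ContinuousOn w (Set.Icc s (s + h)))
    (hK : ∀ t ∈ Set.Icc s (s + h), ∀ u ∈ Set.Icc s (s + h), w t ≤ K * w u) :
    h ^ r * ∫ t in s..(s + h), w t * (t - s) ^ (-r) ≤ K / (1 - r) * ∫ t in s..(s + h), w t := by
  have hle : s ≤ s + h := by linarith
  have hk : IntervalIntegrable (fun t : ℝ => (t - s) ^ (-r)) volume s (s + h) :=
    intervalIntegrable_sub_rpow (by linarith)
  have harnack := sub_mul_integral_mul_le_of_harnack hle (hw.intervalIntegrable_of_Icc hle) hk
    (hk.continuousOn_mul (by rwa [Set.uIcc_of_le hle]))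
    (fun t ht => Real.rpow_nonneg (sub_nonneg.2 ht.1) _) hK
  rw [integral_sub_rpow (by linarith), add_sub_cancel_left, neg_add_eq_sub] at harnack
  have hpow : h ^ r * h ^ (1 - r) = h := by
    rw [← Real.rpow_add hh, add_sub_cancel, Real.rpow_one]
  refine le_of_mul_le_mul_left ?_ hh
  calc h * (h ^ r * ∫ t in s..(s + h), w t * (t - s) ^ (-r))
      = h ^ r * (h * ∫ t in s..(s + h), w t * (t - s) ^ (-r)) := by ring
    _ ≤ h ^ r * (K * (∫ t in s..(s + h), w t) * (h ^ (1 - r) / (1 - r))) :=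
        mul_le_mul_of_nonneg_left harnack (Real.rpow_nonneg hh.le r)
    _ = h ^ r * h ^ (1 - r) * (K / (1 - r) * ∫ t in s..(s + h), w t) := by ring
    _ = h * (K / (1 - r) * ∫ t in s..(s + h), w t) := by rw [hpow]

end Harnack

theorem rpow_le_rpow_abs_mul_rpow {t u c : ℝ} (p : ℝ) (ht : 0 < t) (hu : 0 < u)
    (htu : t ≤ c * u) (hut : u ≤ c * t) : t ^ p ≤ c ^ |p| * u ^ p := by
  have hc : 0 < c := pos_of_mul_pos_left (ht.trans_le htu) hu.le
  rcases le_total 0 p with hp | hp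
  · rw [abs_of_nonneg hp, ← Real.mul_rpow hc.le hu.le]
    exact Real.rpow_le_rpow ht.le htu hp
  · rw [abs_of_nonpos hp, Real.rpow_neg hc.le, ← div_eq_inv_mul,
      le_div_iff₀' (Real.rpow_pos_of_pos hc p), ← Real.mul_rpow hc.le ht.le]
    exact Real.rpow_le_rpow_of_nonpos hu hut hp

theorem rpow_mul_integral_rpow_mul_sub_rpow_le {r s h : ℝ} (p : ℝ) (hr : r < 1) (hh : 0 < h)
    (hhs : h ≤ s) :
    h ^ r * ∫ t in s..(s + h), t ^ p * (t - s) ^ (-r)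
      ≤ 2 ^ |p| / (1 - r) * ∫ t in s..(s + h), t ^ p := by
  have pos : ∀ t ∈ Set.Icc s (s + h), 0 < t := fun t ht => by linarith [ht.1]
  refine rpow_mul_integral_mul_sub_rpow_le_of_harnack hr hh
    (continuousOn_id.rpow_const fun t ht => Or.inl (pos t ht).ne') fun t ht u hu => ?_
  exact rpow_le_rpow_abs_mul_rpow p (pos t ht) (pos u hu)
    (by linarith [ht.2, hu.1]) (by linarith [hu.2, ht.1])

theorem stmt10_general (α β q : ℝ) (hα : α < 2) (hβ : β ≤ 1) :
    ∃ c > (0 : ℝ), ∀ s : ℝ, 1 ≤ s →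
      s ^ (α * β / 2) * ∫ t in s..(s + s ^ β), t ^ (-q - 1) * (t - s) ^ (-(α / 2))
        ≤ c * ∫ t in s..(s + s ^ β), t ^ (-q - 1) := by
  have hr : α / 2 < 1 := by linarith
  refine ⟨2 ^ |-q - 1| / (1 - α / 2), div_pos (by positivity) (sub_pos.2 hr), fun s hs => ?_⟩
  have hs0 : 0 < s := by linarith
  have hhs : s ^ β ≤ s := Real.rpow_le_self_of_one_le hs hβ
  rw [show α * β / 2 = β * (α / 2) by ring, Real.rpow_mul hs0.le]
  exact rpow_mul_integral_rpow_mul_sub_rpow_le _ hr (Real.rpow_pos_of_pos hs0 β) hhs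

/-- With `0 < β < 1`, `0 < α < 2` and `q > 0`: there exists a constant `c > 0`,
depending only on `α`, `β` and `q`, such that for every `s ≥ 1`,
`s^{αβ/2} · ∫_s^{s+s^β} t^{-q-1} (t-s)^{-α/2} dt ≤ c · ∫_s^{s+s^β} t^{-q-1} dt`. -/
theorem stmt10 (α β : ℝ) (hα0 : 0 < α) (hα2 : α < 2) (hβ0 : 0 < β) (hβ1 : β < 1)
    (q : ℝ) (hq : 0 < q) :
    ∃ c > (0 : ℝ), ∀ s : ℝ, 1 ≤ s →
      s ^ (α * β / 2) * ∫ t in s..(s + s ^ β), t ^ (-q - 1) * (t - s) ^ (-(α / 2))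
        ≤ c * ∫ t in s..(s + s ^ β), t ^ (-q - 1) :=
  stmt10_general α β q hα2 hβ1.le
end
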